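/- arXiv:2510.00912 — 11 statements merged into one kernel-verified Lean document; each statement's English description precedes it below -/
import Mathlib

section
/- Let V be a commutative quantale, (X,d) a V-category, and (φ, ψ) an adjoint pair of V-distributors (φ : E ⇸ X) ⊣ (ψ : X ⇸ E) on X. Then the pair is representable (i.e., there exists x ∈ X with φ b = d x b and ψ a = d a x for all a, b ∈ X) if and only if there exists an element x ∈ X with k ≤ φ x and k ≤ ψ x. -/
/-!
If the pair is represented by `x`, reflexivity `k ≤ d x x` gives `k ≤ φ x` and `k ≤ ψ x`.
Conversely, `⊗` is monotone, so `k ≤ v` implies `u ≤ u ⊗ v`. Hence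
`φ b ≤ φ b ⊗ ψ x ≤ d x b` by the counit and `d x b ≤ d x b ⊗ φ x ≤ φ b` by the action on `φ`;
the two inequalities for `ψ` are dual, using commutativity.
-/

/-- For a commutative quantale `V` and a `V`-category `(X, d)`,
an adjoint pair of `V`-distributors `(φ : E ⇸ X) ⊣ (ψ : X ⇸ E)` is representable
iff there is `x ∈ X` with `k ≤ φ x` and `k ≤ ψ x`. -/
theorem stmt0 {V : Type*} [CompleteLattice V] (mul : V → V → V) (k : V)
    (hmul_comm : ∀ u v : V, mul u v = mul v u)
    (hmul_assoc : ∀ u v w : V, mul (mul u v) w = mul u (mul v w))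
    (hmul_unit : ∀ u : V, mul u k = u)
    (hmul_sSup : ∀ (u : V) (S : Set V), mul u (sSup S) = ⨆ v ∈ S, mul u v)
    {X : Type*} (d : X → X → V)
    (hrefl : ∀ x : X, k ≤ d x x)
    (htrans : ∀ x y z : X, mul (d y z) (d x y) ≤ d x z)
    (φ ψ : X → V)
    (hφ : ∀ a b : X, mul (d a b) (φ a) ≤ φ b)
    (hψ : ∀ a b : X, mul (ψ b) (d a b) ≤ ψ a)
    (hadj_unit : k ≤ ⨆ c : X, mul (ψ c) (φ c))
    (hadj_counit : ∀ a b : X, mul (φ b) (ψ a) ≤ d a b) :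
    (∃ x : X, (∀ b : X, φ b = d x b) ∧ (∀ a : X, ψ a = d a x)) ↔
      (∃ x : X, k ≤ φ x ∧ k ≤ ψ x) := by
  -- Monotonicity of `mul u` comes from preservation of the supremum of a pair `{v, w}`.
  have mono : ∀ u v w : V, v ≤ w → mul u v ≤ mul u w := by
    intro u v w h
    have e := hmul_sSup u {v, w}
    rw [sSup_pair, sup_eq_right.mpr h] at e
    rw [e]
    exact le_iSup₂_of_le v (Set.mem_insert v {w}) le_rfl
  have le_mul : ∀ u v : V, k ≤ v → u ≤ mul u v := by
    intro u v h
    have := mono u k v h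
    rwa [hmul_unit] at this
  constructor
  · rintro ⟨x, h1, h2⟩
    exact ⟨x, (h1 x).symm ▸ hrefl x, (h2 x).symm ▸ hrefl x⟩
  · -- Multiplying by an element above `k` turns the counit into `φ b ≤ d x b`, `ψ a ≤ d a x`,
    -- and the distributor laws into the reverse inequalities.
    rintro ⟨x, h1, h2⟩
    refine ⟨x, fun b => le_antisymm ?_ ?_, fun a => le_antisymm ?_ ?_⟩
    · exact (le_mul _ _ h2).trans (hadj_counit x b)
    · exact (le_mul _ _ h1).trans (hφ x b)
    · exact (le_mul _ _ h1).trans (hmul_comm _ _ ▸ hadj_counit a x)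
    · exact (le_mul _ _ h2).trans (hmul_comm _ _ ▸ hψ a x)
end

section
/- Let V be a commutative quantale whose unit k is totally compact (for every subset S ⊆ V, k ≤ ⨆ S implies k ≤ s for some s ∈ S) and satisfies: for all u, v ∈ V, k ≤ u ⊗ v implies k ≤ u and k ≤ v. Then every V-category is Lawvere complete: every adjoint pair of V-distributors (φ : E ⇸ X) ⊣ (ψ : X ⇸ E) on any V-category (X,d) is representable. -/
/-- If the unit `k` of a commutative quantale `V` is totally compact
and `k ≤ u ⊗ v` implies `k ≤ u` and `k ≤ v`, then every `V`-category is Lawvere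
complete: every adjoint pair of `V`-distributors is representable. -/
theorem stmt2 {V : Type*} [CompleteLattice V] (mul : V → V → V) (k : V)
    (hmul_comm : ∀ u v : V, mul u v = mul v u)
    (hmul_assoc : ∀ u v w : V, mul (mul u v) w = mul u (mul v w))
    (hmul_unit : ∀ u : V, mul u k = u)
    (hmul_sSup : ∀ (u : V) (S : Set V), mul u (sSup S) = ⨆ v ∈ S, mul u v)
    (hcompact : ∀ S : Set V, k ≤ sSup S → ∃ s ∈ S, k ≤ s)
    (hsplit : ∀ u v : V, k ≤ mul u v → k ≤ u ∧ k ≤ v) :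
    ∀ (X : Type*) (d : X → X → V),
      (∀ x : X, k ≤ d x x) →
      (∀ x y z : X, mul (d y z) (d x y) ≤ d x z) →
      ∀ φ ψ : X → V,
        (∀ a b : X, mul (d a b) (φ a) ≤ φ b) →
        (∀ a b : X, mul (ψ b) (d a b) ≤ ψ a) →
        (k ≤ ⨆ c : X, mul (ψ c) (φ c)) →
        (∀ a b : X, mul (φ b) (ψ a) ≤ d a b) →
        ∃ x : X, (∀ b : X, φ b = d x b) ∧ (∀ a : X, ψ a = d a x) := by
  intro X d _ _ φ ψ hφ hψ hunit hcounit
  -- Monotonicity of `⊗` is the sup-preservation law applied to `{u, v}` with `u ≤ v`.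
  have mono : ∀ w u v : V, u ≤ v → mul w u ≤ mul w v := by
    intro w u v huv
    have h := hmul_sSup w {u, v}
    rw [sSup_pair, sup_eq_right.mpr huv] at h
    rw [h]
    exact le_iSup₂_of_le u (Set.mem_insert u {v}) le_rfl
  have le_mul : ∀ w u : V, k ≤ u → w ≤ mul w u := fun w u hu => by
    simpa only [hmul_unit] using mono w k u hu
  -- Total compactness picks out one term of the supremum in the unit of the adjunction;
  -- its index `c` represents the pair, since `k ≤ ψ c` and `k ≤ φ c`.
  obtain ⟨_, ⟨c, rfl⟩, hc⟩ := hcompact (Set.range fun c => mul (ψ c) (φ c)) hunit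
  obtain ⟨hcψ, hcφ⟩ := hsplit _ _ hc
  refine ⟨c, fun b => le_antisymm ?_ ?_, fun a => le_antisymm ?_ ?_⟩
  · exact (le_mul _ _ hcψ).trans (hcounit c b)
  · exact (le_mul _ _ hcφ).trans (hφ c b)
  · exact (le_mul _ _ hcφ).trans (hmul_comm (ψ a) (φ c) ▸ hcounit a c)
  · exact (le_mul _ _ hcψ).trans (hmul_comm (d a c) (ψ c) ▸ hψ a c)
end

section
/- Let X be a complete extended metric space (an emetric space X with the Cauchy-completeness property). Let φ, ψ : X → ℝ≥0∞ satisfy: (i) φ y ≤ edist x y + φ x for all x, y; (ii) ψ x ≤ ψ y + edist x y for all x, y; (iii) edist x y ≤ φ y + ψ x for all x, y; (iv) ⨅_{c ∈ X} (ψ c + φ c) = 0. Then there exists x ∈ X with φ y = edist x y for all y and ψ y = edist y x for all y (in particular φ x = 0 and ψ x = 0). -/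
open scoped ENNReal

/-!
By the unit condition there are points `c n` with `ψ (c n) + φ (c n) < 2⁻¹ ^ n`. The counit
condition bounds `edist (c n) (c (n + 1))` by `φ (c (n + 1)) + ψ (c n)`, so `c` is Cauchy; let `x`
be its limit. Functoriality of `φ` and `ψ` gives `φ x = ψ x = 0` in the limit, and then
functoriality together with the counit condition at `x` forces `φ = edist x ·` and
`ψ = edist · x`.
-/

/-- In a complete extended metric space, every adjoint pair of
`[0,∞]`-distributors `(φ, ψ)` is representable. -/
theorem stmt3 {X : Type*} [EMetricSpace X] [CompleteSpace X]
    (φ ψ : X → ℝ≥0∞)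
    (hφ : ∀ x y : X, φ y ≤ edist x y + φ x)
    (hψ : ∀ x y : X, ψ x ≤ ψ y + edist x y)
    (hcounit : ∀ x y : X, edist x y ≤ φ y + ψ x)
    (hunit : (⨅ c : X, (ψ c + φ c)) = 0) :
    ∃ x : X, (∀ y : X, φ y = edist x y) ∧ (∀ y : X, ψ y = edist y x) := by
  have hex : ∀ n : ℕ, ∃ c : X, ψ c + φ c < (2⁻¹ : ℝ≥0∞) ^ n := fun n => by
    apply iInf_lt_iff.mp
    rw [hunit]
    exact ENNReal.pow_pos (by simp) n
  choose c hc using hex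
  have hψc : ∀ n, ψ (c n) ≤ 2⁻¹ ^ n := fun n => le_self_add.trans (hc n).le
  have hφc : ∀ n, φ (c n) ≤ 2⁻¹ ^ n := fun n => le_add_self.trans (hc n).le
  have hhalf : (2⁻¹ : ℝ≥0∞) < 1 := ENNReal.inv_lt_one.mpr (by norm_num)
  have hpow : Filter.Tendsto (fun n : ℕ => (2⁻¹ : ℝ≥0∞) ^ n) Filter.atTop (nhds 0) :=
    ENNReal.tendsto_pow_atTop_nhds_zero_of_lt_one hhalf
  have hcauchy : CauchySeq c := by
    refine cauchySeq_of_edist_le_geometric 2⁻¹ 2 hhalf (by norm_num) fun n => ?_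
    calc edist (c n) (c (n + 1)) ≤ φ (c (n + 1)) + ψ (c n) := hcounit _ _
      _ ≤ 2⁻¹ ^ n + 2⁻¹ ^ n :=
        add_le_add ((hφc _).trans (pow_le_pow_right_of_le_one' hhalf.le n.le_succ)) (hψc n)
      _ = 2 * 2⁻¹ ^ n := (two_mul _).symm
  obtain ⟨x, hx⟩ := cauchySeq_tendsto_of_complete hcauchy
  have hdist : Filter.Tendsto (fun n => edist (c n) x + 2⁻¹ ^ n) Filter.atTop (nhds 0) := by
    simpa using (tendsto_iff_edist_tendsto_0.mp hx).add hpow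
  have hφx : φ x = 0 := le_antisymm
    (ge_of_tendsto' hdist fun n => (hφ (c n) x).trans (by gcongr; exact hφc n)) zero_le
  have hψx : ψ x = 0 := le_antisymm
    (ge_of_tendsto' hdist fun n => (hψ x (c n)).trans (by
      rw [add_comm, edist_comm]; gcongr; exact hψc n)) zero_le
  refine ⟨x, fun y => le_antisymm ?_ ?_, fun y => le_antisymm ?_ ?_⟩
  · simpa [hφx] using hφ x y
  · simpa [hψx] using hcounit x y
  · simpa [hψx] using hψ y x
  · simpa [hφx] using hcounit y x
end

section
/- Let X be an extended metric space. Suppose that for all functions φ, ψ : X → ℝ≥0∞ satisfying (i) φ y ≤ edist x y + φ x for all x, y; (ii) ψ x ≤ ψ y + edist x y for all x, y; (iii) edist x y ≤ φ y + ψ x for all x, y; and (iv) ⨅_{c ∈ X} (ψ c + φ c) = 0, there exists x ∈ X with φ y = edist x y for all y. Then X is a complete space: every Cauchy sequence in X converges. -/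
open scoped ENNReal

/-!
Given a Cauchy sequence `u`, the function `φ y = limsup (edist (u n) y)` is the distance from `y`
to the would-be limit of `u`. Subadditivity of `limsup` makes `(φ, φ)` an adjoint pair, where the
Cauchy condition enters as `φ (u m) → 0` (`limsup_edist_le`). A point `x` representing `φ`
satisfies `edist x (u m) = φ (u m) → 0`, so `u` converges to `x`.
-/

/-- The library's `ENNReal.limsup_add_le` needs a filter closed under countable intersections,
which `atTop` on `ℕ` is not. -/
theorem ennreal_limsup_add_le (u v : ℕ → ℝ≥0∞) :
    Filter.limsup (u + v) Filter.atTop ≤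
      Filter.limsup u Filter.atTop + Filter.limsup v Filter.atTop := by
  refine ENNReal.le_of_forall_pos_le_add fun ε hε hfin => ?_
  obtain ⟨hu, hv⟩ := ENNReal.add_lt_top.1 hfin
  have hε2 : (ε : ℝ≥0∞) / 2 ≠ 0 := (ENNReal.half_pos (by exact_mod_cast hε.ne')).ne'
  refine Filter.limsup_le_of_le (by isBoundedDefault) ?_
  filter_upwards [Filter.eventually_lt_of_limsup_lt (ENNReal.lt_add_right hu.ne hε2),
    Filter.eventually_lt_of_limsup_lt (ENNReal.lt_add_right hv.ne hε2)] with n h1 h2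
  calc u n + v n ≤ _ := add_le_add h1.le h2.le
    _ = _ := by rw [add_add_add_comm, ENNReal.add_halves]

theorem limsup_edist_le {X : Type*} [EMetricSpace X] {u : ℕ → X} (hu : CauchySeq u)
    {ε : ℝ≥0∞} (hε : 0 < ε) :
    ∃ N, ∀ m ≥ N, Filter.limsup (fun n => edist (u n) (u m)) Filter.atTop ≤ ε := by
  obtain ⟨N, hN⟩ := EMetric.cauchySeq_iff.1 hu ε hε
  refine ⟨N, fun m hm => Filter.limsup_le_of_le (by isBoundedDefault) ?_⟩
  filter_upwards [Filter.eventually_ge_atTop N] with n hn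
  exact (hN n hn m hm).le

/-- If every adjoint pair of `[0,∞]`-distributors `(φ, ψ)` on an
extended metric space `X` is representable, then `X` is a complete space. -/
theorem stmt4 {X : Type*} [EMetricSpace X]
    (h : ∀ φ ψ : X → ℝ≥0∞,
      (∀ x y : X, φ y ≤ edist x y + φ x) →
      (∀ x y : X, ψ x ≤ ψ y + edist x y) →
      (∀ x y : X, edist x y ≤ φ y + ψ x) →
      (⨅ c : X, (ψ c + φ c)) = 0 →
      ∃ x : X, ∀ y : X, φ y = edist x y) :
    CompleteSpace X := by
  refine EMetric.complete_of_cauchySeq_tendsto fun u hu => ?_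
  let φ : X → ℝ≥0∞ := fun y => Filter.limsup (fun n => edist (u n) y) Filter.atTop
  have h1 : ∀ x y : X, φ y ≤ edist x y + φ x := fun x y => by
    calc φ y ≤ Filter.limsup ((fun _ : ℕ => edist x y) + fun n => edist (u n) x)
          Filter.atTop := Filter.limsup_le_limsup (.of_forall fun n => by
            simpa [add_comm] using edist_triangle (u n) x y)
      _ ≤ _ := ennreal_limsup_add_le _ _
      _ = _ := by rw [Filter.limsup_const]
  have h3 : ∀ x y : X, edist x y ≤ φ y + φ x := fun x y => by
    calc edist x y = Filter.limsup (fun _ : ℕ => edist x y) Filter.atTop :=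
          (Filter.limsup_const _).symm
      _ ≤ Filter.limsup ((fun n => edist (u n) y) + fun n => edist (u n) x) Filter.atTop :=
          Filter.limsup_le_limsup (.of_forall fun n => by
            simpa [add_comm] using edist_triangle_left x y (u n))
      _ ≤ _ := ennreal_limsup_add_le _ _
  obtain ⟨x, hx⟩ := h φ φ h1
    (fun x y => by simpa [add_comm, edist_comm] using h1 y x) h3 (by
      refine le_antisymm (le_of_forall_gt fun ε hε => ?_) zero_le
      obtain ⟨δ, hδ, hδε⟩ := exists_between hε
      obtain ⟨N, hN⟩ := limsup_edist_le hu (ENNReal.half_pos hδ.ne')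
      refine lt_of_le_of_lt ((iInf_le _ (u N)).trans ?_) hδε
      exact (add_le_add (hN N le_rfl) (hN N le_rfl)).trans (ENNReal.add_halves δ).le)
  refine ⟨x, EMetric.tendsto_atTop.2 fun ε hε => ?_⟩
  obtain ⟨δ, hδ, hδε⟩ := exists_between hε
  obtain ⟨N, hN⟩ := limsup_edist_le hu hδ
  refine ⟨N, fun m hm => ?_⟩
  rw [edist_comm, ← hx]
  exact (hN m hm).trans_lt hδε
end

section
/- Let V be a commutative quantale and let (A_n, ν_n)_{n ∈ ℕ} be a sequence of V-normed sets with connecting maps s_{m,n} : A_m → A_n for m ≤ n satisfying s_{n,n} = id and s_{n,l} ∘ s_{m,n} = s_{m,l} for m ≤ n ≤ l, which is Cauchy: k ≤ ⨆_{N ∈ ℕ} ⨅_{N ≤ m ≤ n} |s_{m,n}|. Let γ_n : A_n → A be maps with γ_m = γ_n ∘ s_{m,n} for m ≤ n, and equip A with the norm |a| = ⨅_{N ∈ ℕ} ⨆_{n ≥ N} ⨆_{a' ∈ γ_n⁻¹(a)} ν_n a'. Then: (C2a) k ≤ ⨆_{N ∈ ℕ} ⨅_{n ≥ N} |γ_n|;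 and (C2b) for every V-normed set (B, ν_B) and every map φ : A → B, ⨆_{K ∈ ℕ} ⨅_{n ≥ K} |φ ∘ γ_n| ≤ |φ|. (Hence the V-normed category of V-normed sets and arbitrary maps is Cauchy cocomplete, for every commutative quantale V.) -/
/-!
Both conditions hold termwise in the index of the outer supremum.

(C2a): if `c` is the Cauchy term at `N`, `n ≥ N` and `a : A n`, then for each `M` the element
`s a : A (max n M)` lies in the fibre of `γ n a` beyond `M`, and `c ⊗ |a| ≤ |s a|`.

(C2b): if `c` is the term at `K`, commutativity turns `c ⊗ |a| ≤ |φ a|` into `|a| ≤ [c, |φ a|]`.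
Bounding the infimum `|a|` by its `K`-th term leaves only a supremum over the fibres of index
`m ≥ K`, where the inequality is the definition of `c`.
-/

/-- For any commutative quantale `V`, given a Cauchy sequence of
`V`-normed sets `(A n, ν n)` with connecting maps `s`, a cocone `γ` over it and
the canonical (final-structure) norm on the vertex, conditions (C2a) and (C2b)
of a normed colimit hold; hence `V`-normed sets form a Cauchy cocomplete
`V`-normed category. -/
theorem stmt6 {V : Type*} [CompleteLattice V] (mul : V → V → V) (k : V)
    (hom : V → V → V)
    (hmul_comm : ∀ u v : V, mul u v = mul v u)
    (hmul_assoc : ∀ u v w : V, mul (mul u v) w = mul u (mul v w))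
    (hmul_unit : ∀ u : V, mul u k = u)
    (hmul_sSup : ∀ (u : V) (S : Set V), mul u (sSup S) = ⨆ v ∈ S, mul u v)
    (hhom : ∀ u v w : V, mul w u ≤ v ↔ w ≤ hom u v)
    (A : ℕ → Type*) (ν : ∀ n, A n → V)
    (s : ∀ {m n : ℕ}, m ≤ n → A m → A n)
    (hs_id : ∀ (n : ℕ) (a : A n), s (le_refl n) a = a)
    (hs_comp : ∀ {m n l : ℕ} (h₁ : m ≤ n) (h₂ : n ≤ l) (a : A m),
      s h₂ (s h₁ a) = s (h₁.trans h₂) a)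
    (hCauchy : k ≤ ⨆ N : ℕ, ⨅ m : ℕ, ⨅ n : ℕ, ⨅ _ : N ≤ m, ⨅ h : m ≤ n,
      ⨅ a : A m, hom (ν m a) (ν n (s h a)))
    {L : Type*} (γ : ∀ n, A n → L)
    (hγ : ∀ {m n : ℕ} (h : m ≤ n) (a : A m), γ m a = γ n (s h a)) :
    -- (C2a)
    (k ≤ ⨆ N : ℕ, ⨅ n : ℕ, ⨅ _ : N ≤ n, ⨅ a : A n,
        hom (ν n a)
          (⨅ M : ℕ, ⨆ m : ℕ, ⨆ _ : M ≤ m, ⨆ a' : {a' : A m // γ m a' = γ n a}, ν m a'.1))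
      -- (C2b)
      ∧ (∀ (B : Type*) (νB : B → V) (φ : L → B),
          (⨆ K : ℕ, ⨅ n : ℕ, ⨅ _ : K ≤ n, ⨅ a : A n, hom (ν n a) (νB (φ (γ n a))))
            ≤ ⨅ a : L,
                hom (⨅ M : ℕ, ⨆ m : ℕ, ⨆ _ : M ≤ m, ⨆ a' : {a' : A m // γ m a' = a}, ν m a'.1)
                  (νB (φ a))) := by
  have hswap : ∀ u v w : V, w ≤ hom u v → u ≤ hom w v := fun u v w h =>
    (hhom w v u).1 (hmul_comm w u ▸ (hhom u v w).2 h)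
  refine ⟨hCauchy.trans (iSup_mono fun N => ?_), fun B νB φ => iSup_le fun K => ?_⟩
  · refine le_iInf fun n => le_iInf fun hn => le_iInf fun a => ?_
    rw [← hhom]
    refine le_iInf fun M => ?_
    refine le_trans ?_ (le_iSup₂_of_le (max n M) (le_max_right n M)
      (le_iSup_of_le ⟨s (le_max_left n M) a, (hγ _ a).symm⟩ le_rfl))
    rw [hhom]
    exact iInf_le_of_le n <| iInf_le_of_le (max n M) <| iInf_le_of_le hn <|
      iInf_le_of_le (le_max_left n M) <| iInf_le _ a
  · refine le_iInf fun a => hswap _ _ _ ?_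
    refine iInf_le_of_le K (iSup_le fun m => iSup_le fun hm => iSup_le ?_)
    rintro ⟨a', rfl⟩
    exact hswap _ _ _ (iInf_le_of_le m <| iInf_le_of_le hm <| iInf_le _ a')
end

section
/- Let V be a commutative quantale, (A_n, ν_n)_{n ∈ ℕ} a sequence of V-normed sets with connecting maps s_{m,n} : A_m → A_n for m ≤ n satisfying s_{n,n} = id and s_{n,l} ∘ s_{m,n} = s_{m,l} for m ≤ n ≤ l, and γ_n : A_n → A maps with γ_m = γ_n ∘ s_{m,n} for m ≤ n. Equip A with the norm |a| = ⨅_{N ∈ ℕ} ⨆_{n ≥ N} ⨆_{a' ∈ γ_n⁻¹(a)} ν_n a'. Then for every K ∈ ℕ, ⨅_{n ≥ K} |s_{K,n}| ≤ |γ_K|, where |s_{K,n}| = ⨅_{a ∈ A_K} [ν_K a, ν_n(s_{K,n} a)] and |γ_K| = ⨅_{a ∈ A_K} [ν_K a, |γ_K a|]. -/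
/-- With the canonical norm on the vertex of a cocone `γ` over a
sequence of `V`-normed sets with connecting maps `s`, for every `K` one has
`⨅_{n ≥ K} |s_{K,n}| ≤ |γ_K|`. -/
theorem stmt7 {V : Type*} [CompleteLattice V] (mul : V → V → V) (k : V)
    (hom : V → V → V)
    (hmul_comm : ∀ u v : V, mul u v = mul v u)
    (hmul_assoc : ∀ u v w : V, mul (mul u v) w = mul u (mul v w))
    (hmul_unit : ∀ u : V, mul u k = u)
    (hmul_sSup : ∀ (u : V) (S : Set V), mul u (sSup S) = ⨆ v ∈ S, mul u v)
    (hhom : ∀ u v w : V, mul w u ≤ v ↔ w ≤ hom u v)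
    (A : ℕ → Type*) (ν : ∀ n, A n → V)
    (s : ∀ {m n : ℕ}, m ≤ n → A m → A n)
    (hs_id : ∀ (n : ℕ) (a : A n), s (le_refl n) a = a)
    (hs_comp : ∀ {m n l : ℕ} (h₁ : m ≤ n) (h₂ : n ≤ l) (a : A m),
      s h₂ (s h₁ a) = s (h₁.trans h₂) a)
    {L : Type*} (γ : ∀ n, A n → L)
    (hγ : ∀ {m n : ℕ} (h : m ≤ n) (a : A m), γ m a = γ n (s h a)) :
    ∀ K : ℕ,
      (⨅ n : ℕ, ⨅ h : K ≤ n, ⨅ a : A K, hom (ν K a) (ν n (s h a)))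
        ≤ ⨅ a : A K,
            hom (ν K a)
              (⨅ M : ℕ, ⨆ m : ℕ, ⨆ _ : M ≤ m, ⨆ a' : {a' : A m // γ m a' = γ K a}, ν m a'.1) := by
  intro K
  refine le_iInf fun a => (hhom _ _ _).1 (le_iInf fun M => ?_)
  -- At stage `max K M`, the element `s a` lies in the fibre over `γ K a`, so it bounds the
  -- tail supremum from below.
  have hK : K ≤ max K M := le_max_left K M
  have hM : M ≤ max K M := le_max_right K M
  have h₁ : mul (⨅ n : ℕ, ⨅ h : K ≤ n, ⨅ a : A K, hom (ν K a) (ν n (s h a))) (ν K a)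
      ≤ ν (max K M) (s hK a) :=
    (hhom _ _ _).2 (iInf_le_of_le (max K M) (iInf_le_of_le hK (iInf_le _ a)))
  exact h₁.trans (le_iSup_of_le (max K M) (le_iSup_of_le hM
    (le_iSup (fun a' : {a' : A (max K M) // γ (max K M) a' = γ K a} => ν (max K M) a'.1)
      ⟨s hK a, (hγ hK a).symm⟩)))
end

section
/- Let V be a commutative quantale, (A_n, ν_n)_{n ∈ ℕ} a sequence of V-normed sets with connecting maps s_{m,n} : A_m → A_n for m ≤ n satisfying s_{n,n} = id and s_{n,l} ∘ s_{m,n} = s_{m,l} for m ≤ n ≤ l, and γ_n : A_n → A maps with γ_m = γ_n ∘ s_{m,n} for m ≤ n. Equip A with the norm |a| = ⨅_{N ∈ ℕ} ⨆_{n ≥ N} ⨆_{a' ∈ γ_n⁻¹(a)} ν_n a'. Then for every V-normed set (B, ν_B), every map φ : A → B, and every K ∈ ℕ, one has ⨅_{n ≥ K} |φ ∘ γ_n| ≤ |φ|, where |φ| = ⨅_{a ∈ A} [|a|, ν_B(φ a)]. (No Cauchy hypothesis on the sequence is needed.) -/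
/-- With the canonical norm on the vertex of a cocone `γ` over a
sequence of `V`-normed sets with connecting maps `s`, for every `V`-normed set
`B`, map `φ` out of the vertex, and `K ∈ ℕ`, one has `⨅_{n ≥ K} |φ ∘ γ_n| ≤ |φ|`
(no Cauchy hypothesis needed). -/
theorem stmt8 {V : Type*} [CompleteLattice V] (mul : V → V → V) (k : V)
    (hom : V → V → V)
    (hmul_comm : ∀ u v : V, mul u v = mul v u)
    (hmul_assoc : ∀ u v w : V, mul (mul u v) w = mul u (mul v w))
    (hmul_unit : ∀ u : V, mul u k = u)
    (hmul_sSup : ∀ (u : V) (S : Set V), mul u (sSup S) = ⨆ v ∈ S, mul u v)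
    (hhom : ∀ u v w : V, mul w u ≤ v ↔ w ≤ hom u v)
    (A : ℕ → Type*) (ν : ∀ n, A n → V)
    (s : ∀ {m n : ℕ}, m ≤ n → A m → A n)
    (hs_id : ∀ (n : ℕ) (a : A n), s (le_refl n) a = a)
    (hs_comp : ∀ {m n l : ℕ} (h₁ : m ≤ n) (h₂ : n ≤ l) (a : A m),
      s h₂ (s h₁ a) = s (h₁.trans h₂) a)
    {L : Type*} (γ : ∀ n, A n → L)
    (hγ : ∀ {m n : ℕ} (h : m ≤ n) (a : A m), γ m a = γ n (s h a)) :
    ∀ (B : Type*) (νB : B → V) (φ : L → B) (K : ℕ),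
      (⨅ n : ℕ, ⨅ _ : K ≤ n, ⨅ a : A n, hom (ν n a) (νB (φ (γ n a))))
        ≤ ⨅ a : L,
            hom (⨅ M : ℕ, ⨆ m : ℕ, ⨆ _ : M ≤ m, ⨆ a' : {a' : A m // γ m a' = a}, ν m a'.1)
              (νB (φ a)) := by
  intro B νB φ K
  -- By commutativity, `w ≤ [u, v]` and `u ≤ [w, v]` are equivalent.
  have swap : ∀ u v w : V, w ≤ hom u v ↔ u ≤ hom w v := fun u v w => by
    rw [← hhom, ← hhom, hmul_comm]
  refine le_iInf fun a => (swap _ _ _).2 ?_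
  -- The norm of `a` is at most the tail supremum starting at `M = K`.
  refine (iInf_le _ K).trans ?_
  refine iSup_le fun m => iSup_le fun hm => iSup_le fun ⟨a', ha'⟩ => ?_
  subst ha'
  exact (swap _ _ _).1 ((iInf_le _ m).trans ((iInf_le _ hm).trans (iInf_le _ a')))
end

section
/- Let V be a commutative quantale and let (X_n, D_n)_{n ∈ ℕ} be a sequence of V-distance sets (sets X_n with arbitrary functions D_n : X_n → X_n → V) with connecting maps s_{m,n} : X_m → X_n for m ≤ n satisfying s_{n,n} = id and s_{n,l} ∘ s_{m,n} = s_{m,l}, which is Cauchy with respect to the Lipschitz norm |f| = ⨅_{x,x'} [D(x,x'), D'(f x, f x')], i.e., k ≤ ⨆_{N ∈ ℕ} ⨅_{N ≤ m ≤ n} |s_{m,n}|. Let γ_n : X_n → X be a colimit cocone of the underlying sequence of sets (γ_m = γ_n ∘ s_{m,n}; every x ∈ X equals γ_n(x') for some n, x'; and γ_n x' = γ_m x'' implies s_{n,l} x' = s_{m,l} x'' for some l ≥ n, m). Equip X with D(x,y) = ⨅_{N ∈ ℕ} ⨆_{n ≥ N} ⨆_{x' ∈ γ_n⁻¹(x),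 y' ∈ γ_n⁻¹(y)} D_n x' y'. Then (C2a) k ≤ ⨆_{N ∈ ℕ} ⨅_{n ≥ N} |γ_n| and (C2b) for every V-distance set (Y, D_Y) and every map φ : X → Y, ⨆_{K ∈ ℕ} ⨅_{n ≥ K} |φ ∘ γ_n| ≤ |φ|. (Hence the V-normed category of V-distance sets and arbitrary maps is Cauchy cocomplete, for every commutative quantale V.) -/
/-!
The distance on the vertex is a limsup of the distances `D n` over representatives.

For (C2a), let `c` be the infimum of the norms of the connecting maps from stage `N` on. For
`N ≤ n`, every tail of the limsup contains the distance of the images of `x` and `y` at some stage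
`l ≥ n`, and this distance is at least `c ⊗ D n x y`; so `c` is a lower bound for the norm of `γ n`.

For (C2b), let `a` be the infimum of the norms of `φ ∘ γ n` for `n ≥ K`. Since `a ≤ [d, v]` is
equivalent to `d ≤ [a, v]` by commutativity, it suffices to bound the colimit distance by
`[a, DY (φ x) (φ y)]`. The `K`-th tail of the limsup, a supremum, satisfies this bound termwise.
-/

/-- The distance on the vertex of a cocone `γ` over a sequence of `V`-distance
sets: `D(x,y) = ⨅_N ⨆_{n ≥ N} ⨆_{x' ∈ γ_n⁻¹(x), y' ∈ γ_n⁻¹(y)} D_n x' y'`. -/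
def colimDist {V : Type*} [CompleteLattice V] {X : ℕ → Type*}
    (D : ∀ n, X n → X n → V) {L : Type*} (γ : ∀ n, X n → L) (x y : L) : V :=
  ⨅ N : ℕ, ⨆ n : ℕ, ⨆ _ : N ≤ n,
    ⨆ x' : {x' : X n // γ n x' = x}, ⨆ y' : {y' : X n // γ n y' = y}, D n x'.1 y'.1

/-- For any commutative quantale `V`, given a Cauchy sequence of
`V`-distance sets (for the Lipschitz norm), a colimit cocone `γ` of the
underlying sets, and the canonical distance on the vertex, conditions (C2a) and
(C2b) of a normed colimit hold; hence the `V`-normed category of `V`-distance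
sets and arbitrary maps is Cauchy cocomplete. -/
theorem stmt9 {V : Type*} [CompleteLattice V] (mul : V → V → V) (k : V)
    (hom : V → V → V)
    (hmul_comm : ∀ u v : V, mul u v = mul v u)
    (hmul_assoc : ∀ u v w : V, mul (mul u v) w = mul u (mul v w))
    (hmul_unit : ∀ u : V, mul u k = u)
    (hmul_sSup : ∀ (u : V) (S : Set V), mul u (sSup S) = ⨆ v ∈ S, mul u v)
    (hhom : ∀ u v w : V, mul w u ≤ v ↔ w ≤ hom u v)
    (X : ℕ → Type*) (D : ∀ n, X n → X n → V)
    (s : ∀ {m n : ℕ}, m ≤ n → X m → X n)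
    (hs_id : ∀ (n : ℕ) (x : X n), s (le_refl n) x = x)
    (hs_comp : ∀ {m n l : ℕ} (h₁ : m ≤ n) (h₂ : n ≤ l) (x : X m),
      s h₂ (s h₁ x) = s (h₁.trans h₂) x)
    (hCauchy : k ≤ ⨆ N : ℕ, ⨅ m : ℕ, ⨅ n : ℕ, ⨅ _ : N ≤ m, ⨅ h : m ≤ n,
      ⨅ x : X m, ⨅ y : X m, hom (D m x y) (D n (s h x) (s h y)))
    {L : Type*} (γ : ∀ n, X n → L)
    (hγ : ∀ {m n : ℕ} (h : m ≤ n) (x : X m), γ m x = γ n (s h x))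
    (hsurj : ∀ l : L, ∃ (n : ℕ) (x : X n), γ n x = l)
    (hcoeq : ∀ (m n : ℕ) (x : X m) (y : X n), γ m x = γ n y →
      ∃ (l : ℕ) (h₁ : m ≤ l) (h₂ : n ≤ l), s h₁ x = s h₂ y) :
    -- (C2a)
    (k ≤ ⨆ N : ℕ, ⨅ n : ℕ, ⨅ _ : N ≤ n, ⨅ x : X n, ⨅ y : X n,
        hom (D n x y) (colimDist D γ (γ n x) (γ n y)))
      -- (C2b)
      ∧ (∀ (Y : Type*) (DY : Y → Y → V) (φ : L → Y),
          (⨆ K : ℕ, ⨅ n : ℕ, ⨅ _ : K ≤ n, ⨅ x : X n, ⨅ y : X n,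
              hom (D n x y) (DY (φ (γ n x)) (φ (γ n y))))
            ≤ ⨅ x : L, ⨅ y : L, hom (colimDist D γ x y) (DY (φ x) (φ y))) := by
  have hswap : ∀ a d v : V, d ≤ hom a v → a ≤ hom d v := fun a d v h =>
    (hhom d v a).1 (hmul_comm a d ▸ (hhom a v d).2 h)
  constructor
  · refine hCauchy.trans (iSup_mono fun N => ?_)
    refine le_iInf fun n => le_iInf fun hn => le_iInf fun x => le_iInf fun y => ?_
    refine (hhom _ _ _).1 (le_iInf fun M => ?_)
    -- Transport `x` and `y` to the stage `max n M`, which lies in the `M`-th tail.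
    have hl : n ≤ max n M := le_max_left n M
    refine le_trans ((hhom (D n x y) (D (max n M) (s hl x) (s hl y)) _).2 ?_) ?_
    · exact (iInf_le _ n).trans <| (iInf_le _ (max n M)).trans <| (iInf_le _ hn).trans <|
        (iInf_le _ hl).trans <| (iInf_le _ x).trans (iInf_le _ y)
    · exact le_iSup_of_le (max n M) <| le_iSup_of_le (le_max_right n M) <|
        le_iSup_of_le ⟨s hl x, (hγ hl x).symm⟩ <|
        le_iSup_of_le ⟨s hl y, (hγ hl y).symm⟩ le_rfl
  · intro Y DY φ
    refine iSup_le fun K => le_iInf fun x => le_iInf fun y => hswap _ _ _ ?_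
    -- Bound the limsup by its `K`-th tail, then bound that supremum termwise.
    refine (iInf_le _ K).trans ?_
    refine iSup_le fun n => iSup_le fun hn => iSup_le fun x' => iSup_le fun y' => ?_
    obtain ⟨x', rfl⟩ := x'
    obtain ⟨y', rfl⟩ := y'
    refine hswap _ _ _ ?_
    exact (iInf_le _ n).trans <| (iInf_le _ hn).trans <| (iInf_le _ x').trans (iInf_le _ y')
end

section
/- Let V be a complete lattice carrying two commutative quantale structures: ⊗ with unit k and ⊙ with unit e (each operation commutative, associative, unital, and preserving arbitrary suprema in each variable), where e is approximated from totally below: e = ⨆{ε ∈ V : ε ⋘ e}, with ε ⋘ e meaning that for every subset S ⊆ V, e ≤ ⨆ S implies ε ≤ s for some s ∈ S. Let (X_n, D_n)_{n ∈ ℕ} be a sequence of V_⊗-categories (k ≤ D_n x x and D_n y z ⊗ D_n x y ≤ D_n x z) with connecting maps s_{m,n} : X_m → X_n for m ≤ n (s_{n,n} = id, s_{n,l} ∘ s_{m,n} = s_{m,l}), Cauchy with respect to the ⊙-Lipschitz norm |f| = ⨅_{x,y} [D(x,y), D'(f x, f y)]_⊙ (internal hom for ⊙), i.e., e ≤ ⨆_{N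 ∈ ℕ} ⨅_{N ≤ m ≤ n} |s_{m,n}|. Let γ_n : X_n → X be a colimit cocone of the underlying sequence of sets (γ_m = γ_n ∘ s_{m,n}; every x ∈ X equals γ_n(x') for some n, x'; and γ_n x' = γ_m x'' implies s_{n,l} x' = s_{m,l} x'' for some l ≥ n, m). Define D(x,y) = ⨅_{N ∈ ℕ} ⨆_{n ≥ N} ⨆_{x' ∈ γ_n⁻¹(x), y' ∈ γ_n⁻¹(y)} D_n x' y'. Then (X, D) is a V_⊗-category: k ≤ D x x for all x, and D x y ⊗ D y z ≤ D x z for all x, y, z. -/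
/-- A binary operation preserving suprema in its second variable is residuated. -/
lemma exists_residual {V : Type*} [CompleteLattice V] (op : V → V → V)
    (h : ∀ (u : V) (S : Set V), op u (sSup S) = ⨆ v ∈ S, op u v) :
    ∃ r : V → V → V, ∀ u v w : V, op u v ≤ w ↔ v ≤ r u w := by
  have mono : ∀ u v v' : V, v ≤ v' → op u v ≤ op u v' := by
    intro u v v' hv
    have h1 := h u {v, v'}
    rw [sSup_pair, sup_eq_right.mpr hv] at h1
    rw [h1]
    exact le_iSup₂_of_le v (by simp) le_rfl
  refine ⟨fun u w => sSup {v | op u v ≤ w}, fun u v w => ⟨fun hv => le_sSup hv, fun hv => ?_⟩⟩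
  refine (mono u _ _ hv).trans ?_
  rw [h]
  exact iSup₂_le fun _ hx => hx

lemma colimDist_le {V : Type*} [CompleteLattice V] {X : ℕ → Type*}
    {D : ∀ n, X n → X n → V} {L : Type*} {γ : ∀ n, X n → L} {x y : L} {w : V} (N : ℕ)
    (h : ∀ n, N ≤ n → ∀ x' y' : X n, γ n x' = x → γ n y' = y → D n x' y' ≤ w) :
    colimDist D γ x y ≤ w :=
  iInf_le_of_le N <| iSup_le fun n => iSup_le fun hn => iSup_le fun x' => iSup_le fun y' =>
    h n hn x'.1 y'.1 x'.2 y'.2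

lemma le_colimDist {V : Type*} [CompleteLattice V] {X : ℕ → Type*}
    {D : ∀ n, X n → X n → V} {L : Type*} {γ : ∀ n, X n → L} {x y : L} {w : V}
    (h : ∀ N, ∃ n, N ≤ n ∧ ∃ x' y' : X n, γ n x' = x ∧ γ n y' = y ∧ w ≤ D n x' y') :
    w ≤ colimDist D γ x y := by
  refine le_iInf fun N => ?_
  obtain ⟨n, hn, x', y', hx, hy, hw⟩ := h N
  exact le_iSup_of_le n <| le_iSup_of_le hn <| le_iSup_of_le ⟨x', hx⟩ <|
    le_iSup_of_le ⟨y', hy⟩ hw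

/-- Two quantale structures `⊗` (unit `k`) and `⊙` (unit `e`) on a
complete lattice `V`, with `e` approximated from totally below.  Given a
sequence of `V_⊗`-categories that is Cauchy for the `⊙`-Lipschitz norm, a
colimit cocone `γ` of the underlying sets, and the canonical distance `D` on
the vertex, `(X, D)` is again a `V_⊗`-category. -/
theorem stmt10 {V : Type*} [CompleteLattice V]
    (tens : V → V → V) (k : V) (odot : V → V → V) (e : V) (homO : V → V → V)
    (htens_comm : ∀ u v : V, tens u v = tens v u)
    (htens_assoc : ∀ u v w : V, tens (tens u v) w = tens u (tens v w))
    (htens_unit : ∀ u : V, tens u k = u)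
    (htens_sSup : ∀ (u : V) (S : Set V), tens u (sSup S) = ⨆ v ∈ S, tens u v)
    (hodot_comm : ∀ u v : V, odot u v = odot v u)
    (hodot_assoc : ∀ u v w : V, odot (odot u v) w = odot u (odot v w))
    (hodot_unit : ∀ u : V, odot u e = u)
    (hodot_sSup : ∀ (u : V) (S : Set V), odot u (sSup S) = ⨆ v ∈ S, odot u v)
    (hhomO : ∀ u v w : V, odot w u ≤ v ↔ w ≤ homO u v)
    (happrox : e = sSup {ε : V | ∀ S : Set V, e ≤ sSup S → ∃ s ∈ S, ε ≤ s})
    (X : ℕ → Type*) (D : ∀ n, X n → X n → V)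
    (hrefl : ∀ (n : ℕ) (x : X n), k ≤ D n x x)
    (htrans : ∀ (n : ℕ) (x y z : X n), tens (D n y z) (D n x y) ≤ D n x z)
    (s : ∀ {m n : ℕ}, m ≤ n → X m → X n)
    (hs_id : ∀ (n : ℕ) (x : X n), s (le_refl n) x = x)
    (hs_comp : ∀ {m n l : ℕ} (h₁ : m ≤ n) (h₂ : n ≤ l) (x : X m),
      s h₂ (s h₁ x) = s (h₁.trans h₂) x)
    (hCauchy : e ≤ ⨆ N : ℕ, ⨅ m : ℕ, ⨅ n : ℕ, ⨅ _ : N ≤ m, ⨅ h : m ≤ n,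
      ⨅ x : X m, ⨅ y : X m, homO (D m x y) (D n (s h x) (s h y)))
    {L : Type*} (γ : ∀ n, X n → L)
    (hγ : ∀ {m n : ℕ} (h : m ≤ n) (x : X m), γ m x = γ n (s h x))
    (hsurj : ∀ l : L, ∃ (n : ℕ) (x : X n), γ n x = l)
    (hcoeq : ∀ (m n : ℕ) (x : X m) (y : X n), γ m x = γ n y →
      ∃ (l : ℕ) (h₁ : m ≤ l) (h₂ : n ≤ l), s h₁ x = s h₂ y) :
    (∀ x : L, k ≤ colimDist D γ x x)
      ∧ (∀ x y z : L,
          tens (colimDist D γ x y) (colimDist D γ y z) ≤ colimDist D γ x z) := by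
  constructor
  · intro x
    refine le_colimDist fun N => ?_
    obtain ⟨n, x', hx⟩ := hsurj x
    have hx' := (hγ (le_max_left n N) x').symm.trans hx
    exact ⟨max n N, le_max_right _ _, _, _, hx', hx', hrefl _ _⟩
  intro x y z
  obtain ⟨hom, hhom⟩ := exists_residual tens htens_sSup
  have tmono : ∀ {a b c d : V}, a ≤ c → b ≤ d → tens a b ≤ tens c d := by
    have right : ∀ {a b d : V}, b ≤ d → tens a b ≤ tens a d := fun {a b d} h =>
      (hhom a b _).2 (h.trans ((hhom a d _).1 le_rfl))
    intro a b c d h1 h2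
    refine (right h2).trans ?_
    rw [htens_comm a, htens_comm c]
    exact right h1
  -- Inequalities may be tested after multiplying by elements totally below the unit.
  have approx : ∀ {a b : V},
      (∀ ε : V, (∀ S : Set V, e ≤ sSup S → ∃ s ∈ S, ε ≤ s) → odot ε a ≤ b) → a ≤ b := by
    intro a b h
    have h1 : e ≤ homO a b := by
      rw [happrox]
      exact sSup_le fun ε hε => (hhomO _ _ _).1 (h ε hε)
    have h2 := (hhomO _ _ _).2 h1
    rwa [hodot_comm, hodot_unit] at h2
  have cauchy : ∀ ε : V, (∀ S : Set V, e ≤ sSup S → ∃ s ∈ S, ε ≤ s) →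
      ∃ N : ℕ, ∀ (m n : ℕ) (_ : N ≤ m) (h : m ≤ n) (x y : X m),
        odot ε (D m x y) ≤ D n (s h x) (s h y) := by
    intro ε hε
    obtain ⟨_, ⟨N, rfl⟩, hN⟩ := hε _ hCauchy
    refine ⟨N, fun m n hm h x y => (hhomO _ _ _).2 (hN.trans ?_)⟩
    exact (iInf_le _ m).trans <| (iInf_le _ n).trans <| (iInf_le _ hm).trans <|
      (iInf_le _ h).trans <| (iInf_le _ x).trans (iInf_le _ y)
  -- The suprema defining both distances are moved out by residuation.
  have flip : ∀ {ε c a w : V}, tens c (odot ε a) ≤ w ↔ a ≤ homO ε (hom c w) := by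
    intro ε c a w
    rw [hhom, hodot_comm, hhomO]
  rw [hhom]
  refine approx fun ε' hε' => ?_
  rw [← hhom, htens_comm, hhom]
  refine approx fun ε hε => ?_
  rw [← hhom, flip]
  obtain ⟨N₁, h₁⟩ := cauchy ε hε
  obtain ⟨N₂, h₂⟩ := cauchy ε' hε'
  refine colimDist_le N₁ fun m hm x' y' hx' hy' => ?_
  rw [← flip, htens_comm, flip]
  refine colimDist_le N₂ fun n hn y'' z'' hy'' hz'' => ?_
  rw [← flip]
  refine le_colimDist fun N => ?_
  obtain ⟨l, hml, hnl, hl⟩ := hcoeq m n y' y'' (hy'.trans hy''.symm)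
  have hlM := le_max_left l N
  have hyy : s (hml.trans hlM) y' = s (hnl.trans hlM) y'' := by
    rw [← hs_comp hml hlM, ← hs_comp hnl hlM, hl]
  refine ⟨max l N, le_max_right _ _, s (hml.trans hlM) x', s (hnl.trans hlM) z'',
    (hγ _ _).symm.trans hx', (hγ _ _).symm.trans hz'', ?_⟩
  refine (tmono (h₁ m _ hm (hml.trans hlM) x' y') (h₂ n _ hn (hnl.trans hlM) y'' z'')).trans ?_
  rw [htens_comm, hyy]
  exact htrans _ _ _ _
end

section
/- Let V be a commutative quantale whose unit k is approximated from totally below: k = ⨆{ε ∈ V : ε ⋘ k}, where ε ⋘ k means that for every subset S ⊆ V, k ≤ ⨆ S implies ε ≤ s for some s ∈ S. Let (X_n, D_n)_{n ∈ ℕ} be a sequence of V-categories with connecting maps s_{m,n} : X_m → X_n for m ≤ n (s_{n,n} = id, s_{n,l} ∘ s_{m,n} = s_{m,l}), Cauchy with respect to the Lipschitz norm |f| = ⨅_{x,y} [D(x,y), D'(f x, f y)], i.e., k ≤ ⨆_{N ∈ ℕ} ⨅_{N ≤ m ≤ n} |s_{m,n}|. Let γ_n : X_n → X be a colimit cocone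 of the underlying sequence of sets (γ_m = γ_n ∘ s_{m,n}; every x ∈ X equals γ_n(x') for some n, x'; and γ_n x' = γ_m x'' implies s_{n,l} x' = s_{m,l} x'' for some l ≥ n, m). Define D(x,y) = ⨅_{N ∈ ℕ} ⨆_{n ≥ N} ⨆_{x' ∈ γ_n⁻¹(x), y' ∈ γ_n⁻¹(y)} D_n x' y'. Then (X, D) is a V-category: k ≤ D x x for all x, and D x y ⊗ D y z ≤ D x z for all x, y, z. -/
/-- If the unit `k` of a commutative quantale `V` is approximated
from totally below, then for a Cauchy sequence of `V`-categories (in the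
Lipschitz norm), a colimit cocone `γ` of the underlying sets, and the canonical
distance `D` on the vertex, `(X, D)` is again a `V`-category. -/
theorem stmt11 {V : Type*} [CompleteLattice V]
    (mul : V → V → V) (k : V) (hom : V → V → V)
    (hmul_comm : ∀ u v : V, mul u v = mul v u)
    (hmul_assoc : ∀ u v w : V, mul (mul u v) w = mul u (mul v w))
    (hmul_unit : ∀ u : V, mul u k = u)
    (hmul_sSup : ∀ (u : V) (S : Set V), mul u (sSup S) = ⨆ v ∈ S, mul u v)
    (hhom : ∀ u v w : V, mul w u ≤ v ↔ w ≤ hom u v)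
    (happrox : k = sSup {ε : V | ∀ S : Set V, k ≤ sSup S → ∃ s ∈ S, ε ≤ s})
    (X : ℕ → Type*) (D : ∀ n, X n → X n → V)
    (hrefl : ∀ (n : ℕ) (x : X n), k ≤ D n x x)
    (htrans : ∀ (n : ℕ) (x y z : X n), mul (D n y z) (D n x y) ≤ D n x z)
    (s : ∀ {m n : ℕ}, m ≤ n → X m → X n)
    (hs_id : ∀ (n : ℕ) (x : X n), s (le_refl n) x = x)
    (hs_comp : ∀ {m n l : ℕ} (h₁ : m ≤ n) (h₂ : n ≤ l) (x : X m),
      s h₂ (s h₁ x) = s (h₁.trans h₂) x)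
    (hCauchy : k ≤ ⨆ N : ℕ, ⨅ m : ℕ, ⨅ n : ℕ, ⨅ _ : N ≤ m, ⨅ h : m ≤ n,
      ⨅ x : X m, ⨅ y : X m, hom (D m x y) (D n (s h x) (s h y)))
    {L : Type*} (γ : ∀ n, X n → L)
    (hγ : ∀ {m n : ℕ} (h : m ≤ n) (x : X m), γ m x = γ n (s h x))
    (hsurj : ∀ l : L, ∃ (n : ℕ) (x : X n), γ n x = l)
    (hcoeq : ∀ (m n : ℕ) (x : X m) (y : X n), γ m x = γ n y →
      ∃ (l : ℕ) (h₁ : m ≤ l) (h₂ : n ≤ l), s h₁ x = s h₂ y) :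
    (∀ x : L, k ≤ colimDist D γ x x)
      ∧ (∀ x y z : L,
          mul (colimDist D γ x y) (colimDist D γ y z) ≤ colimDist D γ x z) := by
  have mono : ∀ {a b c d : V}, a ≤ b → c ≤ d → mul a c ≤ mul b d := by
    have h1 : ∀ {a b : V} (c : V), a ≤ b → mul a c ≤ mul b c := fun c h =>
      (hhom _ _ _).2 (h.trans ((hhom _ _ _).1 le_rfl))
    intro a b c d hab hcd
    refine (h1 c hab).trans ?_
    rw [hmul_comm b c, hmul_comm b d]
    exact h1 b hcd
  have : Std.Commutative mul := ⟨hmul_comm⟩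
  have : Std.Associative mul := ⟨hmul_assoc⟩
  -- An element totally below `k` bounds the Lipschitz norms of all late connecting maps.
  have key : ∀ ε : V, (∀ S : Set V, k ≤ sSup S → ∃ s ∈ S, ε ≤ s) →
      ∃ N : ℕ, ∀ (m n : ℕ) (_ : N ≤ m) (h : m ≤ n) (x y : X m),
        mul ε (D m x y) ≤ D n (s h x) (s h y) := by
    intro ε hε
    obtain ⟨_, ⟨N, rfl⟩, hN⟩ := hε _ hCauchy
    refine ⟨N, fun m n hm h x y => (hhom _ _ _).2 (hN.trans ?_)⟩
    exact iInf_le_of_le m <| iInf_le_of_le n <| iInf_le_of_le hm <| iInf_le_of_le h <|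
      iInf_le_of_le x <| iInf_le _ y
  have le_stage : ∀ (x y : L) (N n : ℕ) (_ : N ≤ n) (x' y' : X n), γ n x' = x → γ n y' = y →
      D n x' y' ≤ ⨆ n : ℕ, ⨆ _ : N ≤ n, ⨆ x' : {x' : X n // γ n x' = x},
        ⨆ y' : {y' : X n // γ n y' = y}, D n x'.1 y'.1 := by
    intro x y N n hn x' y' hx hy
    exact le_iSup_of_le n <| le_iSup_of_le hn <| le_iSup_of_le ⟨x', hx⟩ <|
      le_iSup_of_le ⟨y', hy⟩ le_rfl
  -- To bound `D(x, y) ⊗ w` it suffices to bound `D_n x' y' ⊗ w` from any one stage on.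
  have elim : ∀ (x y : L) (M : ℕ) (w t : V),
      (∀ n, M ≤ n → ∀ x' y' : X n, γ n x' = x → γ n y' = y → mul (D n x' y') w ≤ t) →
      mul (colimDist D γ x y) w ≤ t := by
    intro x y M w t H
    refine (hhom _ _ _).2 ((iInf_le _ M).trans ?_)
    exact iSup_le fun n => iSup_le fun hn => iSup_le fun x' => iSup_le fun y' =>
      (hhom _ _ _).1 (H n hn x'.1 y'.1 x'.2 y'.2)
  have approx : ∀ p t : V,
      (∀ ε : V, (∀ S : Set V, k ≤ sSup S → ∃ s ∈ S, ε ≤ s) → mul ε p ≤ t) → p ≤ t := by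
    intro p t H
    rw [← hmul_unit p, hmul_comm, hhom]
    exact happrox.le.trans (sSup_le fun ε hε => (hhom _ _ _).1 (H ε hε))
  refine ⟨fun x => le_iInf fun N => ?_, fun x y z => le_iInf fun N => ?_⟩
  · obtain ⟨n, x', hx⟩ := hsurj x
    have hx' : γ (max n N) (s (le_max_left n N) x') = x := (hγ _ _).symm.trans hx
    exact (hrefl _ _).trans (le_stage x x N _ (le_max_right n N) _ _ hx' hx')
  · refine approx _ _ fun ε hε => approx _ _ fun δ hδ => ?_
    obtain ⟨Nε, hNε⟩ := key ε hε
    obtain ⟨Nδ, hNδ⟩ := key δ hδ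
    have e1 : mul δ (mul ε (mul (colimDist D γ x y) (colimDist D γ y z))) =
        mul (colimDist D γ x y) (mul (colimDist D γ y z) (mul δ ε)) := by ac_rfl
    rw [e1]
    refine elim x y (max N Nε) _ _ fun m hm x₁ y₁ hx₁ hy₁ => ?_
    have e2 : mul (D m x₁ y₁) (mul (colimDist D γ y z) (mul δ ε)) =
        mul (colimDist D γ y z) (mul (D m x₁ y₁) (mul δ ε)) := by ac_rfl
    rw [e2]
    refine elim y z Nδ _ _ fun n hn y₂ z₂ hy₂ hz₂ => ?_
    obtain ⟨l, hml, hnl, hl⟩ := hcoeq m n y₁ y₂ (hy₁.trans hy₂.symm)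
    have e3 : mul (D n y₂ z₂) (mul (D m x₁ y₁) (mul δ ε)) =
        mul (mul δ (D n y₂ z₂)) (mul ε (D m x₁ y₁)) := by ac_rfl
    rw [e3]
    have b1 := hNδ n l hn hnl y₂ z₂
    have b2 := hNε m l ((le_max_right _ _).trans hm) hml x₁ y₁
    rw [← hl] at b1
    exact (mono b1 b2).trans <| (htrans _ _ _ _).trans <|
      le_stage x z N l (((le_max_left _ _).trans hm).trans hml) _ _
        ((hγ _ _).symm.trans hx₁) ((hγ _ _).symm.trans hz₂)
end

section
/- Let (X_n, D_n)_{n ∈ ℕ} be a sequence of Lawvere metric spaces (sets X_n with D_n : X_n → X_n → ℝ≥0∞ satisfying D_n x x = 0 and D_n x z ≤ D_n x y + D_n y z) with connecting maps s_{m,n} : X_m → X_n for m ≤ n (s_{n,n} = id, s_{n,l} ∘ s_{m,n} = s_{m,l}), which is Cauchy with respect to the multiplicative Lipschitz norm L(f) = ⨆_{x,y} D'(f x, f y) / D(x,y) (division in ℝ≥0∞), i.e., ⨅_{N ∈ ℕ} ⨆_{N ≤ m ≤ n} L(s_{m,n}) ≤ 1. Let γ_n : X_n → X be a colimit cocone of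 the underlying sequence of sets (γ_m = γ_n ∘ s_{m,n}; every x ∈ X equals γ_n(x') for some n, x'; and γ_n x' = γ_m x'' implies s_{n,l} x' = s_{m,l} x'' for some l ≥ n, m). Define D(x,y) = ⨆_{N ∈ ℕ} ⨅_{n ≥ N} ⨅_{x' ∈ γ_n⁻¹(x), y' ∈ γ_n⁻¹(y)} D_n x' y'. Then (X, D) is a Lawvere metric space: D x x = 0 for all x, and D x z ≤ D x y + D y z for all x, y, z. -/
/-!
Given `e > 0`, the Cauchy condition makes every connecting map between sufficiently late stages
`(1 + e)`-Lipschitz. For the triangle inequality, pick representatives of `(x, y)` and of `(y, z)`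
at late stages whose distances exceed `D(x,y)` and `D(y,z)` by less than `e`. The two
representatives of `y` become equal at some later stage `l`; pushing everything to `l` and using
the triangle inequality there yields representatives of `(x, z)` at distance at most
`(1 + e) * ((D(x,y) + e) + (D(y,z) + e))`. Letting `e → 0` concludes (`le_of_forall_error`).
-/

open scoped ENNReal

/-- The distance on the vertex of a cocone `γ` over a sequence of Lawvere
metric spaces: `D(x,y) = ⨆_N ⨅_{n ≥ N} ⨅_{x' ∈ γ_n⁻¹(x), y' ∈ γ_n⁻¹(y)} D_n x' y'`
(the order of `[0,∞]` as a quantale is the opposite of the usual order, so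
suprema and infima are interchanged). -/
noncomputable def colimDistE {X : ℕ → Type*}
    (D : ∀ n, X n → X n → ℝ≥0∞) {L : Type*} (γ : ∀ n, X n → L) (x y : L) : ℝ≥0∞ :=
  ⨆ N : ℕ, ⨅ n : ℕ, ⨅ _ : N ≤ n,
    ⨅ x' : {x' : X n // γ n x' = x}, ⨅ y' : {y' : X n // γ n y' = y}, D n x'.1 y'.1

open Filter Topology

theorem colimDistE_le {X : ℕ → Type*} (D : ∀ n, X n → X n → ℝ≥0∞) {L : Type*}
    (γ : ∀ n, X n → L) {x y : L} {r : ℝ≥0∞}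
    (h : ∀ N, ∃ n, N ≤ n ∧ ∃ x' y' : X n, γ n x' = x ∧ γ n y' = y ∧ D n x' y' ≤ r) :
    colimDistE D γ x y ≤ r := by
  refine iSup_le fun N => ?_
  obtain ⟨n, hn, x', y', hx, hy, hr⟩ := h N
  exact iInf_le_of_le n <| iInf_le_of_le hn <| iInf_le_of_le ⟨x', hx⟩ <|
    iInf_le_of_le ⟨y', hy⟩ hr

theorem exists_lt_of_colimDistE_lt {X : ℕ → Type*} (D : ∀ n, X n → X n → ℝ≥0∞) {L : Type*}
    (γ : ∀ n, X n → L) {x y : L} {r : ℝ≥0∞} (h : colimDistE D γ x y < r) (N : ℕ) :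
    ∃ n, N ≤ n ∧ ∃ x' y' : X n, γ n x' = x ∧ γ n y' = y ∧ D n x' y' < r := by
  have h' := (le_iSup (fun N : ℕ => ⨅ n : ℕ, ⨅ _ : N ≤ n, ⨅ x' : {x' : X n // γ n x' = x},
    ⨅ y' : {y' : X n // γ n y' = y}, D n x'.1 y'.1) N).trans_lt h
  simp only [iInf_lt_iff] at h'
  obtain ⟨n, hn, x', y', hr⟩ := h'
  exact ⟨n, hn, x'.1, y'.1, x'.2, y'.2, hr⟩

theorem le_of_forall_error {t a b : ℝ≥0∞}
    (h : ∀ e : ℝ≥0∞, 0 < e → e ≠ ∞ → t ≤ (1 + e) * ((a + e) + (b + e))) : t ≤ a + b := by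
  have hid : Tendsto (fun e : ℝ≥0∞ => e) (𝓝[>] 0) (𝓝 0) := tendsto_nhdsWithin_of_tendsto_nhds
    tendsto_id
  have hlim : Tendsto (fun e : ℝ≥0∞ => (1 + e) * ((a + e) + (b + e))) (𝓝[>] 0)
      (𝓝 ((1 + 0) * ((a + 0) + (b + 0)))) :=
    ENNReal.Tendsto.mul (tendsto_const_nhds.add hid) (Or.inl (by simp))
      ((tendsto_const_nhds.add hid).add (tendsto_const_nhds.add hid)) (Or.inr (by simp))
  simp only [add_zero, one_mul] at hlim
  refine ge_of_tendsto hlim ?_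
  filter_upwards [self_mem_nhdsWithin, hid.eventually_ne ENNReal.zero_ne_top] with e he he'
  exact h e he he'

/-- Given a sequence of Lawvere metric spaces which is Cauchy for
the multiplicative Lipschitz norm `L(f) = ⨆_{x,y} D'(f x, f y) / D(x, y)`, a
colimit cocone `γ` of the underlying sets, and the canonical distance `D` on
the vertex, `(X, D)` is again a Lawvere metric space. -/
theorem stmt12 (X : ℕ → Type*) (D : ∀ n, X n → X n → ℝ≥0∞)
    (hD_refl : ∀ (n : ℕ) (x : X n), D n x x = 0)
    (hD_tri : ∀ (n : ℕ) (x y z : X n), D n x z ≤ D n x y + D n y z)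
    (s : ∀ {m n : ℕ}, m ≤ n → X m → X n)
    (hs_id : ∀ (n : ℕ) (x : X n), s (le_refl n) x = x)
    (hs_comp : ∀ {m n l : ℕ} (h₁ : m ≤ n) (h₂ : n ≤ l) (x : X m),
      s h₂ (s h₁ x) = s (h₁.trans h₂) x)
    (hCauchy : (⨅ N : ℕ, ⨆ m : ℕ, ⨆ n : ℕ, ⨆ _ : N ≤ m, ⨆ h : m ≤ n,
        ⨆ x : X m, ⨆ y : X m, D n (s h x) (s h y) / D m x y) ≤ 1)
    {L : Type*} (γ : ∀ n, X n → L)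
    (hγ : ∀ {m n : ℕ} (h : m ≤ n) (x : X m), γ m x = γ n (s h x))
    (hsurj : ∀ l : L, ∃ (n : ℕ) (x : X n), γ n x = l)
    (hcoeq : ∀ (m n : ℕ) (x : X m) (y : X n), γ m x = γ n y →
      ∃ (l : ℕ) (h₁ : m ≤ l) (h₂ : n ≤ l), s h₁ x = s h₂ y) :
    (∀ x : L, colimDistE D γ x x = 0)
      ∧ (∀ x y z : L,
          colimDistE D γ x z ≤ colimDistE D γ x y + colimDistE D γ y z) := by
  constructor
  · intro x
    refine le_antisymm (colimDistE_le D γ fun N => ?_) zero_le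
    obtain ⟨n, x', rfl⟩ := hsurj x
    exact ⟨max N n, le_max_left _ _, s (le_max_right _ _) x', s (le_max_right _ _) x',
      (hγ _ x').symm, (hγ _ x').symm, (hD_refl _ _).le⟩
  · intro x y z
    by_cases hxy : colimDistE D γ x y = ∞
    · simp [hxy]
    by_cases hyz : colimDistE D γ y z = ∞
    · simp [hyz]
    refine le_of_forall_error fun e he he' => ?_
    have hc0 : 1 + e ≠ 0 := by simp
    have hct : 1 + e ≠ ∞ := by simp [he']
    have h1 : (1 : ℝ≥0∞) < 1 + e := ENNReal.lt_add_right ENNReal.one_ne_top he.ne'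
    obtain ⟨N₀, hN₀⟩ := iInf_lt_iff.1 (hCauchy.trans_lt h1)
    -- From stage `N₀` on, every connecting map is `(1 + e)`-Lipschitz. Since `1 + e` is neither
    -- `0` nor `∞`, this also covers the source distances `0` and `∞`.
    have hLip : ∀ {m n : ℕ} (_ : N₀ ≤ m) (h : m ≤ n) (u v : X m),
        D n (s h u) (s h v) ≤ (1 + e) * D m u v := by
      intro m n hm h u v
      rw [← ENNReal.div_le_iff_le_mul (Or.inr hct) (Or.inr hc0)]
      refine le_trans ?_ hN₀.le
      exact le_iSup_of_le m <| le_iSup_of_le n <| le_iSup_of_le hm <| le_iSup_of_le h <|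
        le_iSup_of_le u <| le_iSup_of_le v le_rfl
    refine colimDistE_le D γ fun N => ?_
    obtain ⟨m, hm, x₁, y₁, hx₁, hy₁, hd₁⟩ := exists_lt_of_colimDistE_lt D γ
      (ENNReal.lt_add_right hxy he.ne') (max N N₀)
    obtain ⟨n, hn, y₂, z₂, hy₂, hz₂, hd₂⟩ := exists_lt_of_colimDistE_lt D γ
      (ENNReal.lt_add_right hyz he.ne') (max N N₀)
    obtain ⟨l, hml, hnl, hl⟩ := hcoeq m n y₁ y₂ (hy₁.trans hy₂.symm)
    refine ⟨l, ((le_max_left _ _).trans hm).trans hml, s hml x₁, s hnl z₂,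
      (hγ _ _).symm.trans hx₁, (hγ _ _).symm.trans hz₂, ?_⟩
    calc D l (s hml x₁) (s hnl z₂)
        ≤ D l (s hml x₁) (s hml y₁) + D l (s hnl y₂) (s hnl z₂) := by
          rw [← hl]; exact hD_tri _ _ _ _
      _ ≤ (1 + e) * D m x₁ y₁ + (1 + e) * D n y₂ z₂ :=
          add_le_add (hLip ((le_max_right _ _).trans hm) _ _ _)
            (hLip ((le_max_right _ _).trans hn) _ _ _)
      _ = (1 + e) * (D m x₁ y₁ + D n y₂ z₂) := (mul_add _ _ _).symm
      _ ≤ (1 + e) * ((colimDistE D γ x y + e) + (colimDistE D γ y z + e)) := by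
          gcongr
end
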